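/- Let X be a KU-algebra, d a derivation of X, and β a fuzzy set on X. Let μ_β be the strongest fuzzy relation on X, μ_β(x, y) = min(β(x), β(y)), and let D be the self map of the product KU-algebra X × X given by D(x, y) = (d(x), d(y)). If μ_β is a fuzzy left derivations KU-ideal of X × X with respect to D, then β(d(x)) ≤ β(d(0)) = β(0) for all x ∈ X. -/

import Mathlib

/-- A KU-algebra: a set `X` with a binary operation `⋆` and a constant `𝟎` satisfying
(KU1) `(x⋆y)⋆((y⋆z)⋆(x⋆z)) = 𝟎`, (KU2) `x⋆𝟎 = 𝟎`, (KU3) `𝟎⋆x = x`,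
(KU4) `x⋆y = 𝟎` and `y⋆x = 𝟎` imply `x = y`. -/
class KUAlgebra (X : Type*) where
  star : X → X → X
  zero : X
  ku1 : ∀ x y z : X, star (star x y) (star (star y z) (star x z)) = zero
  ku2 : ∀ x : X, star x zero = zero
  ku3 : ∀ x : X, star zero x = x
  ku4 : ∀ x y : X, star x y = zero → star y x = zero → x = y

infixl:70 " ⋆ " => KUAlgebra.star
notation "𝟎" => KUAlgebra.zero

/-- The order `x ≤ y ↔ y ⋆ x = 𝟎` on a KU-algebra. -/
def KUle {X : Type*} [KUAlgebra X] (x y : X) : Prop := y ⋆ x = 𝟎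

/-- `x ∧ y := (x ⋆ y) ⋆ y` in a KU-algebra. -/
def KUwedge {X : Type*} [KUAlgebra X] (x y : X) : X := (x ⋆ y) ⋆ y

/-- An (ℓ,r)-derivation: `d(x⋆y) = (d(x)⋆y) ∧ (x⋆d(y))`. -/
def IsLRDeriv {X : Type*} [KUAlgebra X] (d : X → X) : Prop :=
  ∀ x y : X, d (x ⋆ y) = KUwedge (d x ⋆ y) (x ⋆ d y)

/-- An (r,ℓ)-derivation: `d(x⋆y) = (x⋆d(y)) ∧ (d(x)⋆y)`. -/
def IsRLDeriv {X : Type*} [KUAlgebra X] (d : X → X) : Prop :=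
  ∀ x y : X, d (x ⋆ y) = KUwedge (x ⋆ d y) (d x ⋆ y)

/-- A derivation is both an (ℓ,r)- and an (r,ℓ)-derivation. -/
def IsDeriv {X : Type*} [KUAlgebra X] (d : X → X) : Prop := IsLRDeriv d ∧ IsRLDeriv d

/-- A fuzzy left derivations KU-ideal of `X` with respect to a self map `d`:
a fuzzy set `μ : X → [0,1]` with `μ 𝟎 ≥ μ x` and
`μ (d (x ⋆ z)) ≥ min (μ (d x ⋆ (y ⋆ z))) (μ (d y))`. -/
def IsFuzzyLeftDerivKUIdeal {X : Type*} [KUAlgebra X] (d : X → X) (μ : X → ℝ) : Prop :=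
  (∀ x : X, μ x ∈ Set.Icc (0 : ℝ) 1) ∧
  (∀ x : X, μ 𝟎 ≥ μ x) ∧
  (∀ x y z : X, μ (d (x ⋆ z)) ≥ min (μ (d x ⋆ (y ⋆ z))) (μ (d y)))

/-- A fuzzy right derivations KU-ideal of `X` with respect to a self map `d`:
a fuzzy set `μ : X → [0,1]` with `μ 𝟎 ≥ μ x` and
`μ (d (x ⋆ z)) ≥ min (μ (x ⋆ d (y ⋆ z))) (μ (d y))`. -/
def IsFuzzyRightDerivKUIdeal {X : Type*} [KUAlgebra X] (d : X → X) (μ : X → ℝ) : Prop :=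
  (∀ x : X, μ x ∈ Set.Icc (0 : ℝ) 1) ∧
  (∀ x : X, μ 𝟎 ≥ μ x) ∧
  (∀ x y z : X, μ (d (x ⋆ z)) ≥ min (μ (x ⋆ d (y ⋆ z))) (μ (d y)))

/-- The product of two KU-algebras, with componentwise operation and constant `(𝟎, 𝟎)`. -/
instance instKUProd {X Y : Type*} [KUAlgebra X] [KUAlgebra Y] : KUAlgebra (X × Y) where
  star p q := (p.1 ⋆ q.1, p.2 ⋆ q.2)
  zero := (𝟎, 𝟎)
  ku1 p q r := by
    simp only [Prod.mk.injEq]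
    exact ⟨KUAlgebra.ku1 _ _ _, KUAlgebra.ku1 _ _ _⟩
  ku2 p := by
    simp only [Prod.mk.injEq]
    exact ⟨KUAlgebra.ku2 _, KUAlgebra.ku2 _⟩
  ku3 p := Prod.ext (KUAlgebra.ku3 _) (KUAlgebra.ku3 _)
  ku4 p q h1 h2 := by
    rw [Prod.ext_iff] at h1 h2
    exact Prod.ext (KUAlgebra.ku4 _ _ h1.1 h2.1) (KUAlgebra.ku4 _ _ h1.2 h2.2)

/-- If the strongest fuzzy relation `μ_β(x,y) = min (β x) (β y)` is a fuzzy left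
derivations KU-ideal of `X × X` with respect to `D(x,y) = (d x, d y)`, where `d` is a
derivation, then `β (d x) ≤ β (d 𝟎) = β 𝟎` for all `x`. -/
theorem strongest_relation_ideal_le_zero {X : Type*} [KUAlgebra X]
    (d : X → X) (hd : IsDeriv d) (β : X → ℝ) (hβ : ∀ x : X, β x ∈ Set.Icc (0 : ℝ) 1)
    (h : IsFuzzyLeftDerivKUIdeal (X := X × X) (fun p => (d p.1, d p.2))
      (fun p => min (β p.1) (β p.2))) :
    (∀ x : X, β (d x) ≤ β (d 𝟎)) ∧ β (d 𝟎) = β 𝟎 := by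
  have hself : ∀ z : X, z ⋆ z = 𝟎 := fun z => by
    -- (KU1) at `(𝟎, 𝟎, z)`
    simpa only [KUAlgebra.ku3] using KUAlgebra.ku1 𝟎 𝟎 z
  -- A derivation fixes `𝟎`: expand `d (𝟎 ⋆ 𝟎)`, where `𝟎 ∧ y = y ⋆ y`.
  have hd0 : d 𝟎 = 𝟎 := by
    simpa only [KUwedge, KUAlgebra.ku2, KUAlgebra.ku3, hself] using hd.1 𝟎 𝟎
  -- On the diagonal, `μ_β (𝟎, 𝟎) ≥ μ_β (x, x)` says `β 𝟎 ≥ β x`.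
  have hmax : ∀ x : X, β x ≤ β 𝟎 := fun x => by
    have hx : min (β x) (β x) ≤ min (β 𝟎) (β 𝟎) := h.2.1 (x, x)
    simpa only [min_self] using hx
  rw [hd0]
  exact ⟨fun x => hmax (d x), rfl⟩
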